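/- The function C is strictly decreasing on the real line: for all real R₁ < R₂, C(R₁) > C(R₂). -/

import Mathlib

open MeasureTheory Filter

/-!
Write `F R = erfc R`, `E R = erfc (-R) = 2 - F R`, `g R = exp (-R ^ 2) / √π`, so that `F' = -2 g`
and `g' = -2 R g`. With `M = R E + g` and `N = E + 2 R M` one has `M' = E`, `N' = 4 M`,
`D = N - M ^ 2` and `D' = 2 M F`. All of `E`, `g`, `M`, `N`, `D` vanish at `-∞`, so `M > 0` and
`D > 0`.

Monotonicity of `D / E` is obtained in the manner of the monotone l'Hôpital rule: `D` and `E` vanish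
at `-∞`, and `D' / E' = M F / g` is increasing, because its derivative is `k / g` with
`k = N F - 2 g M > 0`. Concretely `w = E M F / g - D` satisfies `w' = E k / g > 0` and `w → 0` at
`-∞`, hence `w > 0`, while `C' = -2 g w / D ^ 2`.

Positivity of `k` (`kFun_pos`): `k` is even, vanishes at `+∞`, and `k' = -4 q` with
`q = g (E - F) - R E F`. Positivity of `q` on `(0, ∞)` (`qFun_pos`): `q` vanishes at `0` and at
`+∞`, and `q'' = 4 g u` with `u = (1 - F) - 4 R g` negative on `(0, c)` and positive on `(c, ∞)` for
some `c`. So `q` is convex on `[c, ∞)` with limit `0`, hence positive there, and concave on `[0, c]`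
with `q 0 = 0 < q c`, hence positive on `(0, c]`.
-/

/-- The complementary error function. -/
noncomputable def erfc (x : ℝ) : ℝ :=
  2 / Real.sqrt Real.pi * ∫ t in Set.Ioi x, Real.exp (-t ^ 2)

/-- The denominator of the explosion-rate bound. -/
noncomputable def D (R : ℝ) : ℝ :=
  (1 + 2 * R ^ 2) * erfc (-R) + 2 * R * Real.exp (-R ^ 2) / Real.sqrt Real.pi -
    (R * erfc (-R) + Real.exp (-R ^ 2) / Real.sqrt Real.pi) ^ 2

/-- The explosion-rate bound. -/
noncomputable def C (R : ℝ) : ℝ := erfc (-R) / D R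

open Topology

/-! ### Monotonicity and limits at infinity -/

lemma pos_of_deriv_neg_of_tendsto {f f' : ℝ → ℝ} {a : ℝ}
    (hf : ∀ x, a ≤ x → HasDerivAt f (f' x) x) (hneg : ∀ x, a < x → f' x < 0)
    (hlim : Tendsto f atTop (𝓝 0)) {x : ℝ} (hx : a ≤ x) : 0 < f x := by
  have hanti : StrictAntiOn f (Set.Ici a) := by
    apply strictAntiOn_of_deriv_neg (convex_Ici a)
    · exact fun y hy => (hf y hy).continuousAt.continuousWithinAt
    · intro y hy
      rw [interior_Ici] at hy
      rw [(hf y (le_of_lt hy)).deriv]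
      exact hneg y hy
  have h1 : f (x + 1) < f x :=
    hanti hx (Set.mem_Ici.2 (by linarith)) (by linarith)
  have h2 : 0 ≤ f (x + 1) := by
    apply le_of_tendsto hlim
    filter_upwards [eventually_ge_atTop (x + 1)] with y hy
    exact hanti.antitoneOn (Set.mem_Ici.2 (by linarith)) (Set.mem_Ici.2 (by linarith)) hy
  linarith

/-- The limit at `-∞` is expressed through `x ↦ f (-x)` at `+∞`. -/
lemma pos_of_deriv_pos_of_tendsto {f f' : ℝ → ℝ}
    (hf : ∀ x, HasDerivAt f (f' x) x) (hpos : ∀ x, 0 < f' x)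
    (hlim : Tendsto (fun x => f (-x)) atTop (𝓝 0)) (x : ℝ) : 0 < f x := by
  have h := pos_of_deriv_neg_of_tendsto (f := fun y => f (-y)) (f' := fun y => -f' (-y))
    (a := -x) (x := -x) (fun y _ => by
      exact ((hf (-y)).comp y (hasDerivAt_neg y)).congr_deriv (by ring)) (fun y _ => by
      have := hpos (-y)
      linarith) hlim le_rfl
  simpa using h

/-! ### The Gaussian density and the complementary error function -/

/-- The Gaussian density `exp (-x ^ 2) / √π`. -/
noncomputable def gDens (x : ℝ) : ℝ := Real.exp (-x ^ 2) / Real.sqrt Real.pi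

lemma gDens_pos (x : ℝ) : 0 < gDens x := by
  unfold gDens
  positivity

lemma gDens_neg (x : ℝ) : gDens (-x) = gDens x := by
  simp [gDens]

lemma hasDerivAt_gDens (x : ℝ) : HasDerivAt gDens (-2 * x * gDens x) x := by
  have h : HasDerivAt (fun y : ℝ => -y ^ 2) (-(2 * x)) x := by
    exact (hasDerivAt_pow 2 x).neg.congr_deriv (by simp)
  refine HasDerivAt.congr_deriv (h.exp.div_const (Real.sqrt Real.pi)) ?_
  unfold gDens
  ring

lemma tendsto_mul_gDens : Tendsto (fun x => x * gDens x) atTop (𝓝 0) := by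
  have h := (Real.tendsto_pow_mul_exp_neg_atTop_nhds_zero 1).div_const (Real.sqrt Real.pi)
  rw [zero_div] at h
  refine tendsto_of_tendsto_of_tendsto_of_le_of_le' tendsto_const_nhds h ?_ ?_
  · filter_upwards [eventually_ge_atTop 0] with x hx
    exact mul_nonneg hx (gDens_pos x).le
  · filter_upwards [eventually_ge_atTop 1] with x hx
    rw [gDens, ← mul_div_assoc, pow_one]
    gcongr
    nlinarith

lemma tendsto_gDens : Tendsto gDens atTop (𝓝 0) := by
  refine tendsto_of_tendsto_of_tendsto_of_le_of_le' tendsto_const_nhds tendsto_mul_gDens ?_ ?_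
  · exact Eventually.of_forall fun x => (gDens_pos x).le
  · filter_upwards [eventually_ge_atTop 1] with x hx
    nlinarith [gDens_pos x]

lemma integrable_gauss : Integrable (fun t : ℝ => Real.exp (-t ^ 2)) := by
  simpa using integrable_exp_neg_mul_sq (b := 1) one_pos

lemma erfc_eq (x : ℝ) :
    erfc x = 2 / Real.sqrt Real.pi * ((∫ t in Set.Ioi (0 : ℝ), Real.exp (-t ^ 2)) -
      ∫ t in (0 : ℝ)..x, Real.exp (-t ^ 2)) := by
  rw [erfc, ← intervalIntegral.integral_Ioi_sub_Ioi' (a := 0) (b := x)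
    integrable_gauss.integrableOn integrable_gauss.integrableOn]
  ring

lemma hasDerivAt_erfc (x : ℝ) : HasDerivAt erfc (-2 * gDens x) x := by
  have hc : Continuous (fun t : ℝ => Real.exp (-t ^ 2)) := by fun_prop
  have h := ((hc.integral_hasStrictDerivAt 0 x).hasDerivAt.const_sub
    (∫ t in Set.Ioi (0 : ℝ), Real.exp (-t ^ 2))).const_mul (2 / Real.sqrt Real.pi)
  rw [funext erfc_eq]
  refine HasDerivAt.congr_deriv (h) ?_
  unfold gDens
  ring

lemma tendsto_erfc : Tendsto erfc atTop (𝓝 0) := by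
  have h := intervalIntegral_tendsto_integral_Ioi 0
    (integrable_gauss.integrableOn (s := Set.Ioi 0)) tendsto_id
  have h2 := (h.const_sub (∫ t in Set.Ioi (0 : ℝ), Real.exp (-t ^ 2))).const_mul
    (2 / Real.sqrt Real.pi)
  rw [funext erfc_eq]
  simpa using h2

lemma erfc_neg (x : ℝ) : erfc (-x) = 2 - erfc x := by
  have h1 : (∫ t in Set.Ioi (-x), Real.exp (-t ^ 2)) = ∫ t in Set.Iic x, Real.exp (-t ^ 2) := by
    have := integral_comp_neg_Ioi (-x) (fun t : ℝ => Real.exp (-t ^ 2))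
    simpa using this
  have h2 := intervalIntegral.integral_Iic_add_Ioi (b := x)
    (integrable_gauss.integrableOn (s := Set.Iic x)) integrable_gauss.integrableOn
  have h3 : (∫ t : ℝ, Real.exp (-t ^ 2)) = Real.sqrt Real.pi := by
    simpa using integral_gaussian 1
  have h4 : Real.sqrt Real.pi ≠ 0 := by positivity
  rw [erfc, erfc, h1]
  rw [h3] at h2
  field_simp
  linarith

lemma erfc_pos (x : ℝ) : 0 < erfc x :=
  pos_of_deriv_neg_of_tendsto (fun y _ => hasDerivAt_erfc y)
    (fun y _ => by have := gDens_pos y; linarith) tendsto_erfc (le_refl x)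

lemma erfc_lt_two (x : ℝ) : erfc x < 2 := by
  have := erfc_pos (-x)
  rw [erfc_neg] at this
  linarith

lemma erfc_zero : erfc 0 = 1 := by
  have := erfc_neg 0
  rw [neg_zero] at this
  linarith

/-- Mills' ratio bound. -/
lemma erfc_lt {x : ℝ} (hx : 0 < x) : erfc x < gDens x / x := by
  have h := pos_of_deriv_neg_of_tendsto (f := fun y => gDens y / y - erfc y)
    (f' := fun y => -gDens y / y ^ 2) (a := x) (x := x) ?_ ?_ ?_ le_rfl
  · simpa using h
  · intro y hy
    have hy0 : y ≠ 0 := by linarith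
    refine HasDerivAt.congr_deriv (((hasDerivAt_gDens y).div (hasDerivAt_id y) hy0).sub (hasDerivAt_erfc y)) ?_
    simp only [id]
    field_simp
    ring
  · intro y hy
    have := gDens_pos y
    have hy0 : 0 < y := by linarith
    rw [neg_div]
    have : 0 < gDens y / y ^ 2 := by positivity
    linarith
  · simpa using (tendsto_gDens.div_atTop tendsto_id).sub tendsto_erfc

lemma tendsto_mul_erfc : Tendsto (fun x => x * erfc x) atTop (𝓝 0) := by
  refine tendsto_of_tendsto_of_tendsto_of_le_of_le' tendsto_const_nhds tendsto_gDens ?_ ?_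
  · filter_upwards [eventually_ge_atTop 0] with x hx
    exact mul_nonneg hx (erfc_pos x).le
  · filter_upwards [eventually_gt_atTop 0] with x hx
    have := erfc_lt hx
    rw [lt_div_iff₀ hx] at this
    linarith

lemma tendsto_sq_mul_erfc : Tendsto (fun x => x ^ 2 * erfc x) atTop (𝓝 0) := by
  refine tendsto_of_tendsto_of_tendsto_of_le_of_le' tendsto_const_nhds tendsto_mul_gDens ?_ ?_
  · exact Eventually.of_forall fun x => mul_nonneg (sq_nonneg x) (erfc_pos x).le
  · filter_upwards [eventually_gt_atTop 0] with x hx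
    have := erfc_lt hx
    rw [lt_div_iff₀ hx] at this
    nlinarith

lemma tendsto_erfc_div_gDens : Tendsto (fun x => erfc x / gDens x) atTop (𝓝 0) := by
  refine tendsto_of_tendsto_of_tendsto_of_le_of_le' tendsto_const_nhds tendsto_inv_atTop_zero ?_ ?_
  · exact Eventually.of_forall fun x => div_nonneg (erfc_pos x).le (gDens_pos x).le
  · filter_upwards [eventually_gt_atTop 0] with x hx
    have := erfc_lt hx
    rw [lt_div_iff₀ hx] at this
    rw [div_le_iff₀ (gDens_pos x), inv_mul_eq_div, le_div_iff₀ hx]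
    exact this.le

/-! ### The auxiliary functions `q` and `k` -/

/-- `u = (1 - F) - 4 R g`, which carries the sign of the second derivative of `qFun`. -/
noncomputable def uFun (x : ℝ) : ℝ := 1 - erfc x - 4 * x * gDens x

/-- `q = g (E - F) - R E F`. -/
noncomputable def qFun (x : ℝ) : ℝ :=
  2 * gDens x * (1 - erfc x) - x * ((2 - erfc x) * erfc x)

/-- The derivative `4 g ^ 2 - E F` of `qFun`. -/
noncomputable def qFun' (x : ℝ) : ℝ := 4 * gDens x ^ 2 - (2 - erfc x) * erfc x

/-- `k = N F - 2 g M`, expanded in a form that is visibly even. -/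
noncomputable def kFun (x : ℝ) : ℝ :=
  (1 + 2 * x ^ 2) * ((2 - erfc x) * erfc x) - 4 * x * gDens x * (1 - erfc x) - 2 * gDens x ^ 2

lemma hasDerivAt_uFun (x : ℝ) : HasDerivAt uFun (2 * gDens x * (4 * x ^ 2 - 1)) x := by
  refine HasDerivAt.congr_deriv (((hasDerivAt_erfc x).const_sub 1).sub
    (((hasDerivAt_id x).const_mul 4).mul (hasDerivAt_gDens x))) ?_
  simp only [id]
  ring

lemma hasDerivAt_mul_erfc (x : ℝ) :
    HasDerivAt (fun y => (2 - erfc y) * erfc y) (-4 * gDens x * (1 - erfc x)) x := by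
  refine HasDerivAt.congr_deriv (((hasDerivAt_erfc x).const_sub 2).mul (hasDerivAt_erfc x)) ?_
  ring

lemma hasDerivAt_qFun (x : ℝ) : HasDerivAt qFun (qFun' x) x := by
  refine HasDerivAt.congr_deriv ((((hasDerivAt_gDens x).const_mul 2).mul ((hasDerivAt_erfc x).const_sub 1)).sub
    ((hasDerivAt_id x).mul (hasDerivAt_mul_erfc x))) ?_
  simp only [id, qFun']
  ring

lemma hasDerivAt_qFun' (x : ℝ) : HasDerivAt qFun' (4 * gDens x * uFun x) x := by
  refine HasDerivAt.congr_deriv ((((hasDerivAt_gDens x).pow 2).const_mul 4).sub (hasDerivAt_mul_erfc x)) ?_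
  simp only [uFun]
  push_cast
  ring

lemma hasDerivAt_kFun (x : ℝ) : HasDerivAt kFun (-4 * qFun x) x := by
  refine HasDerivAt.congr_deriv (((((((hasDerivAt_id x).pow 2).const_mul 2).const_add 1).mul
    (hasDerivAt_mul_erfc x)).sub ((((hasDerivAt_id x).const_mul 4).mul (hasDerivAt_gDens x)).mul
      ((hasDerivAt_erfc x).const_sub 1))).sub (((hasDerivAt_gDens x).pow 2).const_mul 2)) ?_
  simp only [id, qFun, Pi.pow_apply, Pi.mul_apply]
  push_cast
  ring

lemma tendsto_uFun : Tendsto uFun atTop (𝓝 1) := by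
  have h := (tendsto_erfc.const_sub 1).sub (tendsto_mul_gDens.const_mul 4)
  simp only [mul_zero, sub_zero] at h
  refine h.congr fun x => ?_
  simp only [uFun]
  ring

lemma tendsto_qFun : Tendsto qFun atTop (𝓝 0) := by
  have h := ((tendsto_gDens.const_mul 2).mul (tendsto_erfc.const_sub 1)).sub
    ((tendsto_erfc.const_sub 2).mul tendsto_mul_erfc)
  simp only [mul_zero, zero_mul, sub_zero] at h
  refine h.congr fun x => ?_
  simp only [qFun]
  ring

lemma tendsto_qFun' : Tendsto qFun' atTop (𝓝 0) := by
  have h := ((tendsto_gDens.pow 2).const_mul 4).sub ((tendsto_erfc.const_sub 2).mul tendsto_erfc)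
  norm_num at h
  exact h

lemma tendsto_kFun : Tendsto kFun atTop (𝓝 0) := by
  have h := (((tendsto_erfc.const_sub 2).mul
    (tendsto_erfc.add (tendsto_sq_mul_erfc.const_mul 2))).sub
      ((tendsto_mul_gDens.const_mul 4).mul (tendsto_erfc.const_sub 1))).sub
        ((tendsto_gDens.pow 2).const_mul 2)
  norm_num at h
  refine h.congr fun x => ?_
  simp only [kFun]
  ring

lemma exists_uFun_sign : ∃ c : ℝ, 0 < c ∧ (∀ x, 0 < x → x < c → uFun x < 0) ∧
    ∀ x, c < x → 0 < uFun x := by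
  have hcont : Continuous uFun :=
    continuous_iff_continuousAt.2 fun x => (hasDerivAt_uFun x).continuousAt
  -- `u' = 2 g (4 x ^ 2 - 1)` changes sign at `1 / 2`.
  have hanti : StrictAntiOn uFun (Set.Icc 0 (1 / 2)) := by
    apply strictAntiOn_of_deriv_neg (convex_Icc _ _) hcont.continuousOn
    intro y hy
    rw [interior_Icc] at hy
    rw [(hasDerivAt_uFun y).deriv]
    have := gDens_pos y
    have h4 : 4 * y ^ 2 - 1 < 0 := by nlinarith [hy.1, hy.2]
    nlinarith
  have hmono : StrictMonoOn uFun (Set.Ici (1 / 2)) := by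
    apply strictMonoOn_of_deriv_pos (convex_Ici _) hcont.continuousOn
    intro y hy
    rw [interior_Ici] at hy
    have hy' : 1 / 2 < y := hy
    rw [(hasDerivAt_uFun y).deriv]
    have := gDens_pos y
    have h4 : 0 < 4 * y ^ 2 - 1 := by nlinarith
    positivity
  have h0 : uFun 0 = 0 := by simp [uFun, erfc_zero]
  have hlt : ∀ x, 0 < x → x ≤ 1 / 2 → uFun x < 0 := by
    intro x hx hx2
    rw [← h0]
    exact hanti ⟨le_rfl, by norm_num⟩ ⟨hx.le, hx2⟩ hx
  obtain ⟨b, hb, hb2⟩ := ((tendsto_uFun.eventually (lt_mem_nhds one_pos)).and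
    (eventually_ge_atTop (1 / 2 : ℝ))).exists
  obtain ⟨c, hc, hc0⟩ := intermediate_value_Icc hb2 hcont.continuousOn
    (show (0 : ℝ) ∈ Set.Icc (uFun (1 / 2)) (uFun b) from
      ⟨(hlt _ (by norm_num) le_rfl).le, hb.le⟩)
  refine ⟨c, by linarith [hc.1], fun x hx hxc => ?_, fun x hx => ?_⟩
  · rcases le_total x (1 / 2) with h | h
    · exact hlt x hx h
    · rw [← hc0]
      exact hmono h hc.1 hxc
  · rw [← hc0]
    exact hmono hc.1 (hc.1.trans hx.le) hx

lemma qFun_pos {x : ℝ} (hx : 0 < x) : 0 < qFun x := by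
  obtain ⟨c, hc, hneg, hpos⟩ := exists_uFun_sign
  have hq'neg : ∀ y, c ≤ y → qFun' y < 0 := by
    intro y hy
    have h := pos_of_deriv_neg_of_tendsto (f := fun z => -qFun' z)
      (f' := fun z => -(4 * gDens z * uFun z)) (a := c) (fun z _ => (hasDerivAt_qFun' z).neg)
      (fun z hz => by
        have h1 := gDens_pos z
        have h2 := hpos z hz
        have : 0 < 4 * gDens z * uFun z := by positivity
        linarith) (by simpa using tendsto_qFun'.neg) hy
    simpa using h
  have hqpos : ∀ y, c ≤ y → 0 < qFun y := fun y hy =>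
    pos_of_deriv_neg_of_tendsto (fun z _ => hasDerivAt_qFun z)
      (fun z hz => hq'neg z hz.le) tendsto_qFun hy
  rcases le_or_gt c x with h | h
  · exact hqpos x h
  have hcont : Continuous qFun :=
    continuous_iff_continuousAt.2 fun x => (hasDerivAt_qFun x).continuousAt
  have hcont' : Continuous qFun' :=
    continuous_iff_continuousAt.2 fun x => (hasDerivAt_qFun' x).continuousAt
  have hanti : StrictAntiOn qFun' (Set.Icc 0 c) := by
    apply strictAntiOn_of_deriv_neg (convex_Icc _ _) hcont'.continuousOn
    intro y hy
    rw [interior_Icc] at hy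
    rw [(hasDerivAt_qFun' y).deriv]
    have h1 := gDens_pos y
    have h2 := hneg y hy.1 hy.2
    nlinarith
  -- If `q x ≤ 0`, the mean value theorem on `[0, x]` and `[x, c]` contradicts that `q'` decreases.
  by_contra! hqx
  have h0 : qFun 0 = 0 := by simp [qFun, erfc_zero]
  obtain ⟨y, hy, hy'⟩ := exists_hasDerivAt_eq_slope qFun qFun' hx hcont.continuousOn
    (fun z _ => hasDerivAt_qFun z)
  obtain ⟨z, hz, hz'⟩ := exists_hasDerivAt_eq_slope qFun qFun' h hcont.continuousOn
    (fun z _ => hasDerivAt_qFun z)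
  have hyn : qFun' y ≤ 0 := by
    rw [hy', h0]
    exact div_nonpos_of_nonpos_of_nonneg (by linarith) (by linarith)
  have hzp : 0 < qFun' z := by
    rw [hz']
    exact div_pos (by linarith [hqpos c le_rfl]) (by linarith)
  have := hanti ⟨hy.1.le, by linarith [hy.2]⟩ ⟨by linarith [hz.1], hz.2.le⟩ (hy.2.trans hz.1)
  linarith

lemma kFun_neg (x : ℝ) : kFun (-x) = kFun x := by
  simp only [kFun, erfc_neg, gDens_neg]
  ring

lemma kFun_pos (x : ℝ) : 0 < kFun x := by
  have h : ∀ y, 0 ≤ y → 0 < kFun y := fun y hy =>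
    pos_of_deriv_neg_of_tendsto (fun z _ => hasDerivAt_kFun z)
      (fun z hz => by have := qFun_pos hz; linarith) tendsto_kFun hy
  rcases le_total 0 x with hx | hx
  · exact h x hx
  · rw [← kFun_neg]
    exact h (-x) (by linarith)

/-! ### Positivity of `M`, `D` and `w` -/

/-- `M = R E + g`. -/
noncomputable def mFun (x : ℝ) : ℝ := x * (2 - erfc x) + gDens x

/-- `w = E M F / g - D`, which carries the sign of `-C'`. -/
noncomputable def wFun (x : ℝ) : ℝ := (2 - erfc x) * mFun x * erfc x / gDens x - D x

lemma D_eq (x : ℝ) : D x = (2 - erfc x) + 2 * x * mFun x - mFun x ^ 2 := by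
  simp only [D, erfc_neg, mFun, gDens]
  ring

lemma hasDerivAt_mFun (x : ℝ) : HasDerivAt mFun (2 - erfc x) x := by
  refine HasDerivAt.congr_deriv (((hasDerivAt_id x).mul ((hasDerivAt_erfc x).const_sub 2)).add (hasDerivAt_gDens x)) ?_
  simp only [id]
  ring

lemma hasDerivAt_D (x : ℝ) : HasDerivAt D (2 * mFun x * erfc x) x := by
  rw [funext D_eq]
  refine HasDerivAt.congr_deriv ((((hasDerivAt_erfc x).const_sub 2).add (((hasDerivAt_id x).const_mul 2).mul
    (hasDerivAt_mFun x))).sub ((hasDerivAt_mFun x).pow 2)) ?_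
  simp only [id, mFun]
  push_cast
  ring

lemma mFun_neg (x : ℝ) : mFun (-x) = gDens x - x * erfc x := by
  simp only [mFun, erfc_neg, gDens_neg]
  ring

lemma tendsto_mFun_neg : Tendsto (fun x => mFun (-x)) atTop (𝓝 0) := by
  simpa [mFun_neg] using tendsto_gDens.sub tendsto_mul_erfc

lemma tendsto_D_neg : Tendsto (fun x => D (-x)) atTop (𝓝 0) := by
  have h := (tendsto_erfc.sub ((tendsto_mul_gDens.sub tendsto_sq_mul_erfc).const_mul 2)).sub
    (tendsto_mFun_neg.pow 2)
  norm_num at h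
  refine h.congr fun x => ?_
  simp only [D_eq, mFun_neg, erfc_neg]
  ring

lemma tendsto_wFun_neg : Tendsto (fun x => wFun (-x)) atTop (𝓝 0) := by
  have h := ((tendsto_erfc_div_gDens.mul tendsto_mFun_neg).mul (tendsto_erfc.const_sub 2)).sub
    tendsto_D_neg
  norm_num at h
  refine h.congr fun x => ?_
  simp only [wFun, gDens_neg, erfc_neg]
  ring

lemma mFun_pos (x : ℝ) : 0 < mFun x :=
  pos_of_deriv_pos_of_tendsto hasDerivAt_mFun (fun y => by linarith [erfc_lt_two y])
    tendsto_mFun_neg x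

lemma D_pos (x : ℝ) : 0 < D x :=
  pos_of_deriv_pos_of_tendsto hasDerivAt_D (fun y => by
    have := mFun_pos y
    have := erfc_pos y
    positivity) tendsto_D_neg x

lemma hasDerivAt_wFun (x : ℝ) : HasDerivAt wFun ((2 - erfc x) * kFun x / gDens x) x := by
  have hg := (gDens_pos x).ne'
  refine HasDerivAt.congr_deriv ((((((hasDerivAt_erfc x).const_sub 2).mul (hasDerivAt_mFun x)).mul
    (hasDerivAt_erfc x)).div (hasDerivAt_gDens x) hg).sub (hasDerivAt_D x)) ?_
  simp only [Pi.mul_apply, kFun, mFun]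
  field_simp
  ring

lemma wFun_pos (x : ℝ) : 0 < wFun x :=
  pos_of_deriv_pos_of_tendsto hasDerivAt_wFun (fun y => by
    have := kFun_pos y
    have := gDens_pos y
    have : 0 < 2 - erfc y := by linarith [erfc_lt_two y]
    positivity) tendsto_wFun_neg x

lemma hasDerivAt_C (x : ℝ) : HasDerivAt C (-(2 * gDens x * wFun x / D x ^ 2)) x := by
  have hC : C = fun y => (2 - erfc y) / D y := by
    funext y
    rw [C, erfc_neg]
  have hg := (gDens_pos x).ne'
  have hD := (D_pos x).ne'
  rw [hC]
  refine HasDerivAt.congr_deriv (((hasDerivAt_erfc x).const_sub 2).div (hasDerivAt_D x) hD) ?_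
  simp only [wFun]
  field_simp
  ring

theorem C_strictAnti : ∀ R₁ R₂ : ℝ, R₁ < R₂ → C R₂ < C R₁ := by
  intro R₁ R₂ h
  refine strictAnti_of_deriv_neg (fun x => ?_) h
  rw [(hasDerivAt_C x).deriv]
  have := gDens_pos x
  have := wFun_pos x
  have := D_pos x
  rw [neg_lt_zero]
  positivity
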